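/- Let R be an algebra of finite bidimension (projective dimension of R as an R-bimodule, i.e., as a module over R ⊗ R^op), α an automorphism of R, δ an α-derivation, and A = R[t; α, δ]. Then bidim(A) ≤ bidim(R) + 1. -/

import Mathlib

universe u

open scoped TensorProduct

/-- `pdLE R n M` : the projective dimension of the `R`-module `M` is at most `n`. -/
def pdLE (R : Type u) [Ring R] :
    ℕ → (M : Type u) → (i : AddCommGroup M) → @Module R M _ i.toAddCommMonoid → Prop
  | 0, M, i, j => letI := i; letI := j; Module.Projective R M
  | n + 1, M, i, j => letI := i; letI := j;
      ∃ (ι : Type u) (f : (ι →₀ R) →ₗ[R] M), Function.Surjective f ∧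
        pdLE R n (LinearMap.ker f) inferInstance inferInstance

/-- The projective dimension of `M` over `R`, valued in `ℕ∞`. -/
noncomputable def projDim (R : Type u) [Ring R]
    (M : Type u) (i : AddCommGroup M) (j : @Module R M _ i.toAddCommMonoid) : ℕ∞ :=
  sInf {d : ℕ∞ | ∃ n : ℕ, d = n ∧ pdLE R n M i j}

/-- `A` (with embedding `ι` and distinguished element `t`) is the Ore extension
`R[t; α, δ]`. -/
structure IsOreExtension (k : Type u) [Field k] (R : Type u) [Ring R] [Algebra k R]
    (α : R → R) (δ : R → R)
    (A : Type u) [Ring A] [Algebra k A] (ι : R →ₐ[k] A) (t : A) : Prop where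
  rel : ∀ r : R, t * ι r = ι (α r) * t + ι (δ r)
  repr : ∀ a : A, ∃! c : ℕ →₀ R, a = c.sum fun i r => ι r * t ^ i


open CategoryTheory in
theorem pdLE_iff (T : Type u) [Ring T] (n : ℕ) : ∀ (M : Type u) [i : AddCommGroup M] [j : Module T M],
    pdLE T n M i j ↔ HasProjectiveDimensionLT (ModuleCat.of T M) (n + 1) := by
  induction n with
  | zero =>
    intro M i j
    rw [zero_add, ← projective_iff_hasProjectiveDimensionLT_one, ← IsProjective.iff_projective]
    rfl
  | succ n ih =>
    intro M i j
    constructor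
    · rintro ⟨κ, f, hf, hk⟩
      have hk' := (ih _).1 hk
      have hS := LinearMap.shortExact_shortComplexKer hf
      refine hS.hasProjectiveDimensionLT_X₃ (n + 1) hk' ?_
      have : HasProjectiveDimensionLT (ModuleCat.of T (κ →₀ T)) 1 := by
        rw [← projective_iff_hasProjectiveDimensionLT_one, ← IsProjective.iff_projective]
        infer_instance
      exact hasProjectiveDimensionLT_of_ge _ 1 _ (by omega)
    · intro h
      have hf : Function.Surjective (Finsupp.linearCombination T (id : M → M)) :=
        Finsupp.linearCombination_id_surjective T M
      refine ⟨M, Finsupp.linearCombination T (id : M → M), hf, (ih _).2 ?_⟩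
      have hS := LinearMap.shortExact_shortComplexKer hf
      refine hS.hasProjectiveDimensionLT_X₁ (n + 1) ?_ h
      have : HasProjectiveDimensionLT (ModuleCat.of T (M →₀ T)) 1 := by
        rw [← projective_iff_hasProjectiveDimensionLT_one, ← IsProjective.iff_projective]
        infer_instance
      exact hasProjectiveDimensionLT_of_ge _ 1 _ (by omega)

open CategoryTheory in
theorem pdLE_of_exact (T : Type u) [Ring T] (n : ℕ) {X Y Z : Type u}
    [AddCommGroup X] [Module T X] [AddCommGroup Y] [Module T Y] [AddCommGroup Z] [Module T Z]
    (f : X →ₗ[T] Y) (g : Y →ₗ[T] Z) (hf : Function.Injective f) (hg : Function.Surjective g)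
    (hfg : Function.Exact f g) (hX : pdLE T n X inferInstance inferInstance)
    (hY : pdLE T n Y inferInstance inferInstance) :
    pdLE T (n + 1) Z inferInstance inferInstance := by
  have hX' := (pdLE_iff T n X).1 hX
  have hY' := (pdLE_iff T n Y).1 hY
  refine (pdLE_iff T (n + 1) Z).2 ?_
  have hS := ModuleCat.shortComplex_shortExact
    (ModuleCat.shortComplexOfCompEqZero f g hfg.linearMap_comp_eq_zero) hfg hf hg
  exact hS.hasProjectiveDimensionLT_X₃ (n + 1) hX'
    (hasProjectiveDimensionLT_of_ge _ (n + 1) _ (by omega))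

section Ind

variable {S T : Type u} [Ring S] [Ring T] {φ : S →+* T} {X : Type} (b : X → T)
  {M N N' : Type u} [AddCommGroup M] [Module S M] [AddCommGroup N] [Module T N]
  [AddCommGroup N'] [Module T N']

/-- the comparison map `⊕ M → N`. -/
noncomputable def indMap (j : M →ₛₗ[φ] N) : (X →₀ M) →+ N :=
  Finsupp.liftAddHom fun x => (DistribSMul.toAddMonoidHom N (b x)).comp j.toAddMonoidHom

theorem indMap_single (j : M →ₛₗ[φ] N) (x : X) (m : M) :
    indMap b j (Finsupp.single x m) = b x • j m := by
  simp [indMap]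

theorem exists_extend
    (hb : Function.Surjective (indMap b (N := T) (M := S) φ.toSemilinearMap))
    (j : M →ₛₗ[φ] N) (hj : Function.Bijective (indMap b j)) (g : M →ₛₗ[φ] N') :
    ∃ G : N →ₗ[T] N', ∀ m, G (j m) = g m := by
  let e := AddEquiv.ofBijective (indMap b j) hj
  let G0 : N →+ N' := (indMap b g).comp e.symm.toAddMonoidHom
  have hG0 : ∀ c, G0 (indMap b j c) = indMap b g c := fun c => by
    change indMap b g (e.symm (e c)) = _
    simp
  have key : ∀ (s : T) (m : M), G0 (s • j m) = s • g m := by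
    intro s m
    obtain ⟨c, rfl⟩ := hb s
    induction c using Finsupp.induction_linear with
    | zero => simp
    | add c d hc hd => simp only [map_add, add_smul, hc, hd]
    | single x r =>
      rw [indMap_single]
      have := hG0 (Finsupp.single x (r • m))
      simp only [indMap_single, map_smulₛₗ] at this
      simpa [mul_smul] using this
  refine ⟨{ G0 with map_smul' := ?_ }, ?_⟩
  · intro s y
    obtain ⟨c, rfl⟩ := hj.2 y
    induction c using Finsupp.induction_linear with
    | zero => simp
    | add c d hc hd =>
      change G0 (s • _) = s • G0 _ at hc hd ⊢
      simp only [map_add, smul_add, hc, hd]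
    | single x r =>
      change G0 (s • _) = s • G0 _
      rw [indMap_single, ← mul_smul, key, key, mul_smul]
  · intro m
    have := key 1 m
    simpa using this

/-- the canonical cover attached to a cover of `M` by a free module. -/
noncomputable def indCover (j : M →ₛₗ[φ] N) {κ : Type u} (f : (κ →₀ S) →ₗ[S] M) :
    (κ →₀ T) →ₗ[T] N :=
  Finsupp.linearCombination T fun i => j (f (Finsupp.single i 1))

/-- coordinatewise application of `φ`. -/
noncomputable def indFree (φ : S →+* T) (κ : Type u) : (κ →₀ S) →ₛₗ[φ] (κ →₀ T) where
  toFun := Finsupp.mapRange φ (map_zero φ)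
  map_add' x y := by ext; simp
  map_smul' r x := by ext; simp

theorem indCover_free (j : M →ₛₗ[φ] N) {κ : Type u} (f : (κ →₀ S) →ₗ[S] M) (c : κ →₀ S) :
    indCover j f (indFree φ κ c) = j (f c) := by
  induction c using Finsupp.induction_linear with
  | zero => simp
  | add c d hc hd => simp only [map_add, hc, hd]
  | single x r =>
    have h1 : indFree φ κ (Finsupp.single x r) = Finsupp.single x (φ r) := by
      simp [indFree]
    have h2 : Finsupp.single x r = r • Finsupp.single x (1 : S) := by simp
    rw [h1, h2, map_smul, map_smulₛₗ]
    simp [indCover]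

theorem indCover_indMap (j : M →ₛₗ[φ] N) {κ : Type u} (f : (κ →₀ S) →ₗ[S] M)
    (c : X →₀ (κ →₀ S)) :
    indCover j f (indMap b (indFree φ κ) c) =
      indMap b j (Finsupp.mapRange.addMonoidHom f.toAddMonoidHom c) := by
  induction c using Finsupp.induction_linear with
  | zero => simp
  | add c d hc hd => simp only [map_add, hc, hd]
  | single x r => simp [indMap_single, indCover_free]

theorem indCover_surjective (j : M →ₛₗ[φ] N) (hj : Function.Surjective (indMap b j))
    {κ : Type u} (f : (κ →₀ S) →ₗ[S] M) (hf : Function.Surjective f) :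
    Function.Surjective (indCover j f) := by
  intro y
  obtain ⟨c, rfl⟩ := hj y
  induction c using Finsupp.induction_linear with
  | zero => exact ⟨0, by simp⟩
  | add c d hc hd =>
    obtain ⟨u, hu⟩ := hc
    obtain ⟨v, hv⟩ := hd
    exact ⟨u + v, by simp [hu, hv]⟩
  | single x m =>
    obtain ⟨c, rfl⟩ := hf m
    exact ⟨b x • indFree φ κ c, by rw [map_smul, indCover_free, indMap_single]⟩

theorem indFree_apply (κ : Type u) (c : X →₀ (κ →₀ S)) (i : κ) :
    indMap b (indFree φ κ) c i = indMap b (N := T) (M := S) φ.toSemilinearMap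
      (Finsupp.mapRange.addMonoidHom (Finsupp.applyAddHom i) c) := by
  induction c using Finsupp.induction_linear with
  | zero => simp
  | add c d hc hd => simp only [map_add, Finsupp.add_apply, hc, hd]
  | single x r => simp [indMap_single, indFree]

theorem indFree_bijective (κ : Type u)
    (hb : Function.Bijective (indMap b (N := T) (M := S) φ.toSemilinearMap)) :
    Function.Bijective (indMap b (indFree φ κ)) := by
  constructor
  · intro c d h
    ext x i
    have := congrArg (fun z => z i) h
    simp only [indFree_apply] at this
    simpa using DFunLike.congr_fun (hb.1 this) x
  · intro y
    induction y using Finsupp.induction_linear with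
    | zero => exact ⟨0, by simp⟩
    | add c d hc hd =>
      obtain ⟨u, hu⟩ := hc
      obtain ⟨v, hv⟩ := hd
      exact ⟨u + v, by simp [hu, hv]⟩
    | single i s =>
      obtain ⟨c, rfl⟩ := hb.2 s
      induction c using Finsupp.induction_linear with
      | zero => exact ⟨0, by simp⟩
      | add c d hc hd =>
        obtain ⟨u, hu⟩ := hc
        obtain ⟨v, hv⟩ := hd
        exact ⟨u + v, by simp [hu, hv]⟩
      | single x r =>
        refine ⟨Finsupp.single x (Finsupp.single i r), ?_⟩
        simp [indMap_single, indFree]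

theorem projective_ind
    (hb : Function.Bijective (indMap b (N := T) (M := S) φ.toSemilinearMap))
    (j : M →ₛₗ[φ] N) (hj : Function.Bijective (indMap b j)) [Module.Projective S M] :
    Module.Projective T N := by
  obtain ⟨s, hs⟩ := Module.projective_lifting_property
    (Finsupp.linearCombination S (id : M → M)) (LinearMap.id)
    (Finsupp.linearCombination_id_surjective S M)
  obtain ⟨G, hG⟩ := exists_extend b hb.2 j hj ((indFree φ M).comp s)
  refine Module.Projective.of_split G (indCover j (Finsupp.linearCombination S (id : M → M))) ?_
  ext y
  obtain ⟨c, rfl⟩ := hj.2 y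
  induction c using Finsupp.induction_linear with
  | zero => simp
  | add c d hc hd => simp only [map_add, hc, hd]
  | single x m =>
    rw [indMap_single, map_smul, map_smul]
    congr 1
    simp only [LinearMap.comp_apply, hG, indCover_free]
    have := LinearMap.congr_fun hs m
    simp only [LinearMap.comp_apply] at this
    rw [this]; rfl

theorem pdLE_ind
    (hb : Function.Bijective (indMap b (N := T) (M := S) φ.toSemilinearMap)) (n : ℕ) :
    ∀ (M N : Type u) [AddCommGroup M] [Module S M] [AddCommGroup N] [Module T N]
      (j : M →ₛₗ[φ] N) (_ : Function.Bijective (indMap b j)),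
      pdLE S n M inferInstance inferInstance → pdLE T n N inferInstance inferInstance := by
  induction n with
  | zero =>
    intro M N _ _ _ _ j hj h
    have : Module.Projective S M := h
    exact projective_ind b hb j hj
  | succ n ih =>
    rintro M N _ _ _ _ j hj ⟨κ, f, hf, hK⟩
    refine ⟨κ, indCover j f, indCover_surjective b j hj.2 f hf, ?_⟩
    let j' : LinearMap.ker f →ₛₗ[φ] LinearMap.ker (indCover j f) :=
      { toFun := fun z => ⟨indFree φ κ z.1, by
          rw [LinearMap.mem_ker, indCover_free, LinearMap.mem_ker.1 z.2, map_zero]⟩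
        map_add' := fun x y => Subtype.ext (by simp)
        map_smul' := fun r x => Subtype.ext (by simp) }
    have hj' : ∀ c : X →₀ LinearMap.ker f, (indMap b (M := LinearMap.ker f) (N := LinearMap.ker (indCover j f)) j' c).1 = indMap b (indFree φ κ)
        (Finsupp.mapRange.addMonoidHom (LinearMap.ker f).subtype.toAddMonoidHom c) := by
      intro c
      induction c using Finsupp.induction_linear with
      | zero => simp
      | add c d hc hd => simp only [map_add, Submodule.coe_add, hc, hd]
      | single x r => simp [indMap_single, j']
    have hF := indFree_bijective b κ hb
    refine ih _ _ j' ⟨?_, ?_⟩ hK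
    · intro c d h
      have h1 := hF.1 ((hj' c).symm.trans ((congrArg Subtype.val h).trans (hj' d)))
      refine Finsupp.ext fun x => Subtype.ext ?_
      simpa using DFunLike.congr_fun h1 x
    · rintro ⟨y, hy⟩
      obtain ⟨c, rfl⟩ := hF.2 y
      rw [LinearMap.mem_ker, indCover_indMap, ← map_zero (indMap b j)] at hy
      have h1 := hj.1 hy
      have h2 : ∀ x, f (c x) = 0 := fun x => by simpa using DFunLike.congr_fun h1 x
      refine ⟨Finsupp.onFinset c.support (fun x => ⟨c x, h2 x⟩) ?_, Subtype.ext ?_⟩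
      · intro x hx
        rw [Finsupp.mem_support_iff]
        intro h0
        exact hx (Subtype.ext h0)
      · rw [hj']
        congr 1
        ext x : 1
        simp
end Ind

section Ore

open MulOpposite

variable {k R A : Type u} [Field k] [Ring R] [Algebra k R] [Ring A] [Algebra k A]

/-- `c ↦ ∑ t ^ i * β (c i)`. -/
noncomputable def rightMap (β : R →ₐ[k] A) (t : A) : (ℕ →₀ R) →ₗ[k] A :=
  Finsupp.lsum k fun i => (LinearMap.mulLeft k (t ^ i)) ∘ₗ β.toLinearMap

theorem rightMap_single (β : R →ₐ[k] A) (t : A) (i : ℕ) (r : R) :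
    rightMap β t (Finsupp.single i r) = t ^ i * β r := by simp [rightMap]

/-- `c ↦ ∑ ι (c i) * t ^ i`. -/
noncomputable def leftMap (β : R →ₐ[k] A) (t : A) : (ℕ →₀ R) →ₗ[k] A :=
  Finsupp.lsum k fun i => (LinearMap.mulRight k (t ^ i)) ∘ₗ β.toLinearMap

theorem leftMap_single (β : R →ₐ[k] A) (t : A) (i : ℕ) (r : R) :
    leftMap β t (Finsupp.single i r) = β r * t ^ i := by simp [leftMap]

theorem leftMap_bijective {α δ : R → R} {ι : R →ₐ[k] A} {t : A}
    (hA : IsOreExtension k R α δ A ι t) : Function.Bijective (leftMap ι t) := by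
  have h : ∀ c, leftMap ι t c = c.sum fun i r => ι r * t ^ i := fun c => by
    simp only [leftMap, Finsupp.lsum_apply]
    rfl
  constructor
  · intro c d hcd
    exact (hA.repr (leftMap ι t c)).unique (h c) (hcd.trans (h d))
  · intro a
    obtain ⟨c, hc, -⟩ := hA.repr a
    exact ⟨c, (h c).trans hc.symm⟩

variable {α : R ≃ₐ[k] R} {δ : R →ₗ[k] R} {ι : R →ₐ[k] A} {t : A}
  (rel : ∀ r : R, t * ι r = ι (α r) * t + ι (δ r))
  (Ψ : (ℕ →₀ R) ≃ₗ[k] A) (hΨ : ∀ i r, Ψ (Finsupp.single i r) = ι r * t ^ i)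

include hΨ in
theorem coef_mul (r : R) (a : A) : Ψ.symm (ι r * a) = r • Ψ.symm a := by
  obtain ⟨c, rfl⟩ := Ψ.surjective a
  rw [LinearEquiv.symm_apply_eq, LinearEquiv.symm_apply_apply]
  induction c using Finsupp.induction_linear with
  | zero => simp
  | add c d hc hd => simp only [map_add, mul_add, smul_add, hc, hd]
  | single i s => rw [Finsupp.smul_single, hΨ, hΨ, smul_eq_mul, map_mul, mul_assoc]

include rel hΨ in
theorem coef_t_single (j : ℕ) (r : R) : Ψ.symm (t * (ι r * t ^ j)) =
    Finsupp.single (j + 1) (α r) + Finsupp.single j (δ r) := by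
  rw [LinearEquiv.symm_apply_eq, map_add, hΨ, hΨ, ← mul_assoc, rel, add_mul, mul_assoc, pow_succ']

include rel hΨ in
theorem coef_t (a : A) (j : ℕ) : Ψ.symm (t * a) (j + 1) =
    α (Ψ.symm a j) + δ (Ψ.symm a (j + 1)) := by
  obtain ⟨c, rfl⟩ := Ψ.surjective a
  induction c using Finsupp.induction_linear with
  | zero => simp
  | add c d hc hd =>
    simp only [map_add, mul_add, Finsupp.add_apply, hc, hd]
    abel
  | single i s =>
    rw [LinearEquiv.symm_apply_apply, hΨ, coef_t_single rel Ψ hΨ, Finsupp.add_apply]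
    congr 1
    · simp only [Finsupp.single_apply, add_left_inj]
      split_ifs <;> simp
    · simp only [Finsupp.single_apply]
      split_ifs <;> simp

include rel hΨ in
theorem coef_pow (r : R) (i : ℕ) : ∀ j, i ≤ j →
    Ψ.symm (t ^ i * ι r) j = if i = j then α^[i] r else 0 := by
  induction i with
  | zero =>
    intro j _
    have : Ψ.symm (t ^ 0 * ι r) = Finsupp.single 0 r := by
      rw [LinearEquiv.symm_apply_eq, hΨ]; simp
    rw [this, Finsupp.single_apply]; rfl
  | succ i ih =>
    rintro (_ | j) hj
    · omega
    · rw [pow_succ', mul_assoc, coef_t rel Ψ hΨ, ih j (by omega), ih (j + 1) (by omega),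
        Function.iterate_succ_apply']
      rw [if_neg (show ¬ i = j + 1 by omega)]
      simp only [add_left_inj]
      split_ifs <;> simp

include rel hΨ in
theorem rightMap_bijective : Function.Bijective (rightMap ι t) := by
  constructor
  · rw [injective_iff_map_eq_zero]
    intro c hc
    by_contra h0
    have hne : c.support.Nonempty := Finsupp.support_nonempty_iff.2 h0
    set n := c.support.max' hne with hn
    have h1 : Ψ.symm (rightMap ι t c) n = α^[n] (c n) := by
      have : rightMap ι t c = ∑ i ∈ c.support, t ^ i * ι (c i) := by
        simp [rightMap, Finsupp.lsum_apply, Finsupp.sum]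
      rw [this, map_sum, Finsupp.finsetSum_apply,
        Finset.sum_congr rfl fun i hi => coef_pow rel Ψ hΨ (c i) i n (Finset.le_max' _ _ hi)]
      rw [Finset.sum_ite_eq_of_mem' ]
      exact Finset.max'_mem _ _
    rw [hc, map_zero, Finsupp.zero_apply] at h1
    have h2 : c n = 0 := by
      apply (α.injective.iterate n)
      rw [← h1, Function.iterate_fixed (map_zero α)]
    exact Finsupp.mem_support_iff.1 (Finset.max'_mem _ hne) h2
  · have hr : ∀ (a : A) (r : R), a ∈ LinearMap.range (rightMap ι t) →
        a * ι r ∈ LinearMap.range (rightMap ι t) := by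
      rintro _ r ⟨c, rfl⟩
      induction c using Finsupp.induction_linear with
      | zero => simp
      | add c d hc hd => rw [map_add, add_mul]; exact add_mem hc hd
      | single i s =>
        rw [rightMap_single, mul_assoc, ← map_mul, ← rightMap_single]
        exact ⟨_, rfl⟩
    have ht : ∀ (a : A), a ∈ LinearMap.range (rightMap ι t) →
        a * t ∈ LinearMap.range (rightMap ι t) := by
      rintro _ ⟨c, rfl⟩
      induction c using Finsupp.induction_linear with
      | zero => simp
      | add c d hc hd => rw [map_add, add_mul]; exact add_mem hc hd
      | single i s =>
        have h := rel (α.symm s)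
        rw [AlgEquiv.apply_symm_apply] at h
        refine ⟨Finsupp.single (i + 1) (α.symm s) - Finsupp.single i (δ (α.symm s)), ?_⟩
        rw [map_sub, rightMap_single, rightMap_single, rightMap_single, pow_succ, mul_assoc, h]
        noncomm_ring
    intro a
    obtain ⟨c, rfl⟩ := Ψ.surjective a
    change _ ∈ LinearMap.range (rightMap ι t)
    induction c using Finsupp.induction_linear with
    | zero => simp
    | add c d hc hd => rw [map_add]; exact add_mem hc hd
    | single i s =>
      rw [hΨ]
      induction i with
      | zero => exact ⟨Finsupp.single 0 s, by rw [rightMap_single]; simp⟩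
      | succ i ih => rw [pow_succ, ← mul_assoc]; exact ht _ ih

include rel hΨ in
theorem rightMap_bijective' :
    Function.Bijective (rightMap (ι.comp α.toAlgHom) t) := by
  have h := rightMap_bijective rel Ψ hΨ
  have h2 := (Finsupp.mapRange.linearEquiv (α := ℕ) α.toLinearEquiv).bijective
  convert h.comp h2
  ext c
  rename_i c
  induction c using Finsupp.induction_linear with
  | zero => simp
  | add c d hc hd =>
    simp only [map_add, hc, hd, Function.comp_apply]
  | single i s => simp [rightMap_single]

/-- The ring map `R ⊗ Rᵒᵖ → A ⊗ Aᵒᵖ`. -/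
noncomputable def envMap (β ι : R →ₐ[k] A) : (R ⊗[k] Rᵐᵒᵖ) →+* (A ⊗[k] Aᵐᵒᵖ) :=
  (Algebra.TensorProduct.map β ι.op).toRingHom

theorem envMap_tmul (β ι : R →ₐ[k] A) (a : R) (b : Rᵐᵒᵖ) :
    envMap β ι (a ⊗ₜ b) = β a ⊗ₜ op (ι b.unop) := by
  simp [envMap]

/-- The basis of the enveloping algebra. -/
noncomputable def envB (k : Type u) {A : Type u} [Field k] [Ring A] [Algebra k A] (t : A)
    (x : ℕ × ℕ) : A ⊗[k] Aᵐᵒᵖ := (t ^ x.1) ⊗ₜ op (t ^ x.2)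

include hΨ in
theorem env_bijective {β : R →ₐ[k] A} (hβ : Function.Bijective (rightMap β t)) :
    Function.Bijective (indMap (envB k t) (N := A ⊗[k] Aᵐᵒᵖ) (M := R ⊗[k] Rᵐᵒᵖ)
      (envMap β ι).toSemilinearMap) := by
  let e1 := LinearEquiv.ofBijective (rightMap β t) hβ
  let e2 : (ℕ →₀ Rᵐᵒᵖ) ≃ₗ[k] Aᵐᵒᵖ :=
    (Finsupp.mapRange.linearEquiv (opLinearEquiv k).symm).trans (Ψ.trans (opLinearEquiv k))
  let e := (finsuppTensorFinsupp k k R Rᵐᵒᵖ ℕ ℕ).symm.trans (TensorProduct.congr e1 e2)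
  suffices h : ∀ c, indMap (envB k t) (N := A ⊗[k] Aᵐᵒᵖ) (M := R ⊗[k] Rᵐᵒᵖ)
      (envMap β ι).toSemilinearMap c = e c by
    rw [show ⇑(indMap (envB k t) (N := A ⊗[k] Aᵐᵒᵖ) (M := R ⊗[k] Rᵐᵒᵖ)
      (envMap β ι).toSemilinearMap) = ⇑e from funext h]
    exact e.bijective
  intro c
  induction c using Finsupp.induction_linear with
  | zero => simp
  | add c d hc hd => simp only [map_add, hc, hd]
  | single x s =>
    induction s using TensorProduct.induction_on with
    | zero => simp
    | add c d hc hd => simp only [map_add, Finsupp.single_add, hc, hd]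
    | tmul a b =>
      rw [indMap_single]
      simp [e, e1, e2, finsuppTensorFinsupp_symm_single, rightMap_single, hΨ, envB, envMap_tmul]


/-- coordinates on `A_β ⊗_R A` -/
noncomputable def envCoef (β : R →ₐ[k] A) (Ψ : (ℕ →₀ R) ≃ₗ[k] A) : A ⊗[k] Aᵐᵒᵖ →ₗ[k] (ℕ →₀ A) :=
  TensorProduct.lift ((Algebra.lsmul k k (ℕ →₀ A)).toLinearMap.compl₂
    (Finsupp.mapRange.linearMap β.toLinearMap ∘ₗ Ψ.symm.toLinearMap ∘ₗ
      (opLinearEquiv k).symm.toLinearMap))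

theorem envCoef_tmul (β : R →ₐ[k] A) (a b : A) :
    envCoef β Ψ (a ⊗ₜ op b) = a • Finsupp.mapRange.linearMap β.toLinearMap (Ψ.symm b) := by
  simp [envCoef]

/-- the defining left ideal of `A_β ⊗_R A` -/
noncomputable def envL (β ι : R →ₐ[k] A) : Submodule (A ⊗[k] Aᵐᵒᵖ) (A ⊗[k] Aᵐᵒᵖ) :=
  Submodule.span _ (Set.range fun r : R => β r ⊗ₜ[k] op 1 - 1 ⊗ₜ[k] op (ι r))

theorem envL_rel (β ι : R →ₐ[k] A) (a b : A) (r : R) :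
    (a * β r) ⊗ₜ[k] op b - a ⊗ₜ[k] op (ι r * b) ∈ envL β ι := by
  have : β r ⊗ₜ[k] op 1 - 1 ⊗ₜ[k] op (ι r) ∈ envL β ι := Submodule.subset_span ⟨r, rfl⟩
  have := (envL β ι).smul_mem (a ⊗ₜ[k] op b) this
  simpa [smul_sub, ← op_mul, mul_sub] using this

include hΨ in
theorem envL_le (β : R →ₐ[k] A) (x : A ⊗[k] Aᵐᵒᵖ) (hx : x ∈ envL β ι) : envCoef β Ψ x = 0 := by
  induction hx using Submodule.closure_induction with
  | zero => simp
  | add x y _ _ hx hy => rw [map_add, hx, hy, add_zero]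
  | smul_mem s x hx =>
    obtain ⟨r, rfl⟩ := hx
    induction s using TensorProduct.induction_on with
    | zero => simp
    | add c d hc hd => rw [add_smul, map_add, hc, hd, add_zero]
    | tmul a b =>
      obtain ⟨b, rfl⟩ := op_surjective b
      have h1 : (a ⊗ₜ[k] op b) • (β r ⊗ₜ[k] op 1 - 1 ⊗ₜ[k] op (ι r)) =
          (a * β r) ⊗ₜ[k] op b - a ⊗ₜ[k] op (ι r * b) := by
        simp [mul_sub, ← op_mul]
      change envCoef β Ψ ((a ⊗ₜ[k] op b) • (β r ⊗ₜ[k] op 1 - 1 ⊗ₜ[k] op (ι r))) = 0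
      rw [h1, map_sub, envCoef_tmul, envCoef_tmul, coef_mul Ψ hΨ, sub_eq_zero]
      ext j
      simp [mul_assoc]

/-- a section of the coordinate map -/
noncomputable def envSec (k : Type u) {A : Type u} [Field k] [Ring A] [Algebra k A] (t : A) :
    (ℕ →₀ A) →+ A ⊗[k] Aᵐᵒᵖ :=
  Finsupp.liftAddHom fun j => ((TensorProduct.mk k A Aᵐᵒᵖ).flip (op (t ^ j))).toAddMonoidHom

theorem envSec_single (j : ℕ) (a : A) :
    envSec k t (Finsupp.single j a) = a ⊗ₜ op (t ^ j) := by
  simp [envSec]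

include hΨ in
theorem envSec_sub (β : R →ₐ[k] A) (x : A ⊗[k] Aᵐᵒᵖ) :
    envSec k t (envCoef β Ψ x) - x ∈ envL β ι := by
  induction x using TensorProduct.induction_on with
  | zero => simp
  | add c d hc hd =>
    rw [map_add, map_add, add_sub_add_comm]
    exact add_mem hc hd
  | tmul a b =>
    obtain ⟨b, rfl⟩ := op_surjective b
    obtain ⟨c, rfl⟩ := Ψ.surjective b
    induction c using Finsupp.induction_linear with
    | zero => simp
    | add c d hc hd =>
      rw [map_add, op_add, TensorProduct.tmul_add, map_add, map_add, add_sub_add_comm]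
      exact add_mem hc hd
    | single i s =>
      rw [envCoef_tmul, LinearEquiv.symm_apply_apply, hΨ]
      have := envL_rel β ι a (t ^ i) s
      rw [Finsupp.mapRange.linearMap_apply, Finsupp.mapRange_single, Finsupp.smul_single,
        smul_eq_mul, envSec_single]
      exact this

include hΨ in
theorem mem_envL_iff (β : R →ₐ[k] A) (x : A ⊗[k] Aᵐᵒᵖ) :
    x ∈ envL β ι ↔ envCoef β Ψ x = 0 := by
  refine ⟨envL_le Ψ hΨ β x, fun h => ?_⟩
  have := envSec_sub Ψ hΨ β x
  rw [h, map_zero, zero_sub] at this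
  simpa using this

variable [envR : Module (R ⊗[k] Rᵐᵒᵖ) R]
    (henvR : ∀ (a b x : R), (a ⊗ₜ[k] MulOpposite.op b) • x = a * x * b)

/-- the unit `R → A_β ⊗_R A`. -/
noncomputable def envUnit (β ι : R →ₐ[k] A) :
    R →ₛₗ[envMap β ι] ((A ⊗[k] Aᵐᵒᵖ) ⧸ envL β ι) where
  toFun r := (envL β ι).mkQ (β r ⊗ₜ op 1)
  map_add' x y := by rw [map_add, TensorProduct.add_tmul, map_add]
  map_smul' s r := by
    rw [← map_smul]
    induction s using TensorProduct.induction_on with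
    | zero =>
      refine (congrArg (fun q => (envL β ι).mkQ (β q ⊗ₜ op 1))
        (zero_smul (R ⊗[k] Rᵐᵒᵖ) r)).trans ?_
      simp
    | add c d hc hd =>
      rw [add_smul, map_add, map_add, add_smul, map_add, TensorProduct.add_tmul, map_add, hc, hd]
    | tmul a b =>
      obtain ⟨b, rfl⟩ := op_surjective b
      rw [henvR, envMap_tmul, ← sub_eq_zero, ← map_sub, Submodule.mkQ_apply,
        Submodule.Quotient.mk_eq_zero]
      have := envL_rel β ι (β (a * r)) 1 b
      simpa using this

/-- lift of the comparison map -/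
noncomputable def envLift (β : R →ₐ[k] A) (t : A) : (ℕ × ℕ →₀ R) →+ A ⊗[k] Aᵐᵒᵖ :=
  Finsupp.liftAddHom fun x => ((TensorProduct.mk k A Aᵐᵒᵖ).flip (op (t ^ x.2)) ∘ₗ
    LinearMap.mulLeft k (t ^ x.1) ∘ₗ β.toLinearMap).toAddMonoidHom

theorem envLift_single (β : R →ₐ[k] A) (i j : ℕ) (r : R) :
    envLift β t (Finsupp.single (i, j) r) = (t ^ i * β r) ⊗ₜ op (t ^ j) := by
  simp [envLift]

theorem envLift_mk (β : R →ₐ[k] A) (c : ℕ × ℕ →₀ R) :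
    indMap (envB k t) (envUnit henvR β ι) c = (envL β ι).mkQ (envLift β t c) := by
  induction c using Finsupp.induction_linear with
  | zero => simp
  | add c d hc hd => simp only [map_add, hc, hd]
  | single x r =>
    obtain ⟨i, j⟩ := x
    rw [indMap_single, envLift_single]
    change _ • (envL β ι).mkQ (β r ⊗ₜ op 1) = _
    rw [← map_smul]
    simp [envB]

include hΨ in
theorem envCoef_envLift (β : R →ₐ[k] A) (c : ℕ × ℕ →₀ R) (j : ℕ) :
    envCoef β Ψ (envLift β t c) j = rightMap β t
      (Finsupp.comapDomain.addMonoidHom (f := fun i : ℕ => (i, j))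
        (fun _ _ h => (Prod.ext_iff.1 h).1) c) := by
  induction c using Finsupp.induction_linear with
  | zero => simp
  | add c d hc hd => simp only [map_add, Finsupp.add_apply, hc, hd]
  | single x r =>
    obtain ⟨i, l⟩ := x
    have h1 : Ψ.symm (t ^ l) = Finsupp.single l 1 := by
      rw [LinearEquiv.symm_apply_eq, hΨ]; simp
    have h2 : Finsupp.comapDomain.addMonoidHom (f := fun i : ℕ => (i, j))
        (fun _ _ h => (Prod.ext_iff.1 h).1) (Finsupp.single (i, l) r) =
        if l = j then Finsupp.single i r else 0 := by
      ext m
      change Finsupp.single (i, l) r (m, j) = _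
      simp only [Finsupp.single_apply, Prod.mk.injEq]
      by_cases h : l = j <;> simp [h, Finsupp.single_apply]
    rw [envLift_single, envCoef_tmul, h1, h2]
    by_cases h : l = j <;> simp [h, rightMap_single]

include hΨ in
theorem envUnit_bijective {β : R →ₐ[k] A} (hβ : Function.Bijective (rightMap β t)) :
    Function.Bijective (indMap (envB k t) (envUnit henvR β ι)) := by
  constructor
  · rw [injective_iff_map_eq_zero]
    intro c hc
    rw [envLift_mk, Submodule.mkQ_apply, Submodule.Quotient.mk_eq_zero,
      mem_envL_iff Ψ hΨ] at hc
    ext ⟨i, j⟩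
    have h := envCoef_envLift Ψ hΨ β c j
    rw [hc, Finsupp.zero_apply, ← map_zero (rightMap β t)] at h
    exact (DFunLike.congr_fun (hβ.1 h) i).symm
  · intro y
    obtain ⟨x, rfl⟩ := (envL β ι).mkQ_surjective y
    have hx : (envL β ι).mkQ x = (envL β ι).mkQ (envSec k t (envCoef β Ψ x)) := by
      rw [eq_comm, ← sub_eq_zero, ← map_sub, Submodule.mkQ_apply, Submodule.Quotient.mk_eq_zero]
      exact envSec_sub Ψ hΨ β x
    rw [hx]
    suffices h : ∀ c : ℕ →₀ A, ∃ d, envLift β t d = envSec k t c by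
      obtain ⟨d, hd⟩ := h (envCoef β Ψ x)
      exact ⟨d, by rw [envLift_mk, hd]⟩
    intro c
    change _ ∈ AddMonoidHom.range (envLift β t)
    induction c using Finsupp.induction_linear with
    | zero => simp
    | add c d hc hd => rw [map_add]; exact add_mem hc hd
    | single j a =>
      obtain ⟨d, rfl⟩ := hβ.2 a
      induction d using Finsupp.induction_linear with
      | zero => simp
      | add c d hc hd => rw [map_add, Finsupp.single_add, map_add]; exact add_mem hc hd
      | single i r =>
        exact ⟨Finsupp.single (i, j) r, by
          rw [envLift_single, envSec_single, rightMap_single]⟩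

include hΨ henvR in
theorem pdLE_env {β : R →ₐ[k] A} (hβ : Function.Bijective (rightMap β t)) (n : ℕ)
    (h : pdLE (R ⊗[k] Rᵐᵒᵖ) n R inferInstance envR) :
    pdLE (A ⊗[k] Aᵐᵒᵖ) n ((A ⊗[k] Aᵐᵒᵖ) ⧸ envL β ι) inferInstance inferInstance :=
  pdLE_ind (envB k t) (env_bijective Ψ hΨ hβ) n R _ (envUnit henvR β ι)
    (envUnit_bijective Ψ hΨ henvR hβ) h

/-- the element `t ⊗ 1 - 1 ⊗ t` -/
noncomputable def envW (k : Type u) {A : Type u} [Field k] [Ring A] [Algebra k A] (t : A) :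
    A ⊗[k] Aᵐᵒᵖ := t ⊗ₜ op 1 - 1 ⊗ₜ op t

theorem tmul_envW (a b : A) :
    (a ⊗ₜ[k] op b) * envW k t = (a * t) ⊗ₜ op b - a ⊗ₜ op (t * b) := by
  simp [envW, mul_sub]

include rel hΨ in
theorem envCoef_envW (x : A ⊗[k] Aᵐᵒᵖ) (j : ℕ) :
    envCoef ι Ψ (x * envW k t) (j + 1) =
      envCoef (ι.comp α.toAlgHom) Ψ x (j + 1) * t - envCoef (ι.comp α.toAlgHom) Ψ x j := by
  induction x using TensorProduct.induction_on with
  | zero => simp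
  | add c d hc hd =>
    simp only [add_mul, map_add, Finsupp.add_apply, hc, hd]
    abel
  | tmul a b =>
    obtain ⟨b, rfl⟩ := op_surjective b
    obtain ⟨c, rfl⟩ := Ψ.surjective b
    induction c using Finsupp.induction_linear with
    | zero => simp
    | add c d hc hd =>
      simp only [op_add, TensorProduct.tmul_add, add_mul, map_add, Finsupp.add_apply, hc, hd]
      abel
    | single i s =>
      rw [tmul_envW, map_sub, envCoef_tmul, envCoef_tmul, envCoef_tmul,
        LinearEquiv.symm_apply_apply, hΨ, coef_t_single rel Ψ hΨ]
      have h := rel s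
      rcases eq_or_ne i (j + 1) with rfl | h1
      · simp [Finsupp.single_apply, mul_assoc, h, mul_add]
      · rcases eq_or_ne i j with rfl | h2
        · simp [Finsupp.single_apply]
        · simp [Finsupp.single_apply, h1, h2]

theorem eq_zero_of_shift (y : ℕ →₀ A) (h : ∀ j, y (j + 1) * t - y j = 0) : y = 0 := by
  obtain ⟨n, hn⟩ : ∃ n, ∀ m, n ≤ m → y m = 0 := by
    refine ⟨y.support.sup id + 1, fun m hm => ?_⟩
    by_contra h0
    have := Finset.le_sup (f := id) (Finsupp.mem_support_iff.2 h0)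
    simp only [id] at this
    omega
  induction n with
  | zero => ext m; simpa using hn m (Nat.zero_le _)
  | succ n ih =>
    apply ih
    intro m hm
    have := h m
    rw [hn (m + 1) (by omega), zero_mul, zero_sub, neg_eq_zero] at this
    exact this

include rel in
theorem envL_envW (x : A ⊗[k] Aᵐᵒᵖ) (hx : x ∈ envL (ι.comp α.toAlgHom) ι) :
    x * envW k t ∈ envL ι ι := by
  induction hx using Submodule.span_induction with
  | zero => simp
  | add x y _ _ hx hy => rw [add_mul]; exact add_mem hx hy
  | smul s x _ hx => rw [smul_eq_mul, mul_assoc]; exact (envL ι ι).smul_mem s hx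
  | mem x hx =>
    obtain ⟨r, rfl⟩ := hx
    have h1 := envL_rel ι ι t 1 r
    have h2 := envL_rel ι ι 1 1 (δ r)
    have h3 := envL_rel ι ι 1 t (α r)
    have h4 := sub_mem h1 (add_mem h2 h3)
    have e : (((ι.comp α.toAlgHom) r ⊗ₜ[k] op 1 - 1 ⊗ₜ[k] op (ι r)) * envW k t : A ⊗[k] Aᵐᵒᵖ) =
      (t * ι r) ⊗ₜ[k] op 1 - t ⊗ₜ[k] op (ι r * 1) -
      ((1 * ι (δ r)) ⊗ₜ[k] op 1 - 1 ⊗ₜ[k] op (ι (δ r) * 1) +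
       ((1 * ι (α r)) ⊗ₜ[k] op t - 1 ⊗ₜ[k] op (ι (α r) * t))) := by
      rw [sub_mul, tmul_envW, tmul_envW, rel]
      simp only [one_mul, mul_one, op_add, TensorProduct.add_tmul, TensorProduct.tmul_add,
        AlgHom.comp_apply]
      change (ι (α r) * t) ⊗ₜ[k] op 1 - ι (α r) ⊗ₜ[k] op t - _ = _
      abel
    rw [← e] at h4
    exact h4

variable [envA : Module (A ⊗[k] Aᵐᵒᵖ) A]
    (henvA : ∀ (a b x : A), (a ⊗ₜ[k] MulOpposite.op b) • x = a * x * b)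

include rel hΨ henvR henvA in
theorem pdLE_ore (n : ℕ) (h : pdLE (R ⊗[k] Rᵐᵒᵖ) n R inferInstance envR) :
    pdLE (A ⊗[k] Aᵐᵒᵖ) (n + 1) A inferInstance envA := by
  have hN1 := pdLE_env Ψ hΨ henvR (rightMap_bijective rel Ψ hΨ) n h
  have hN2 := pdLE_env Ψ hΨ henvR (rightMap_bijective' rel Ψ hΨ) n h
  let D : ((A ⊗[k] Aᵐᵒᵖ) ⧸ envL (ι.comp α.toAlgHom) ι) →ₗ[A ⊗[k] Aᵐᵒᵖ]
      ((A ⊗[k] Aᵐᵒᵖ) ⧸ envL ι ι) :=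
    (envL (ι.comp α.toAlgHom) ι).liftQ
      ((envL ι ι).mkQ ∘ₗ LinearMap.toSpanSingleton (A ⊗[k] Aᵐᵒᵖ) _ (envW k t)) (by
        intro x hx
        rw [LinearMap.mem_ker, LinearMap.comp_apply, Submodule.mkQ_apply,
          Submodule.Quotient.mk_eq_zero]
        exact envL_envW rel x hx)
  let μ : ((A ⊗[k] Aᵐᵒᵖ) ⧸ envL ι ι) →ₗ[A ⊗[k] Aᵐᵒᵖ] A :=
    (envL ι ι).liftQ (LinearMap.toSpanSingleton (A ⊗[k] Aᵐᵒᵖ) A (1 : A)) (by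
      refine Submodule.span_le.2 ?_
      rintro _ ⟨r, rfl⟩
      change (ι r ⊗ₜ[k] op 1 - 1 ⊗ₜ[k] op (ι r) : A ⊗[k] Aᵐᵒᵖ) • (1 : A) = 0
      rw [sub_smul, henvA, henvA]
      simp only [one_mul, mul_one, sub_self])
  have hD : ∀ x, D ((envL (ι.comp α.toAlgHom) ι).mkQ x) = (envL ι ι).mkQ (x * envW k t) :=
    fun x => rfl
  have hμ : ∀ x, μ ((envL ι ι).mkQ x) = x • (1 : A) := fun x => rfl
  refine pdLE_of_exact _ n D μ ?_ ?_ ?_ hN2 hN1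
  · rw [injective_iff_map_eq_zero]
    intro y hy
    obtain ⟨x, rfl⟩ := Submodule.mkQ_surjective _ y
    rw [hD, Submodule.mkQ_apply, Submodule.Quotient.mk_eq_zero, mem_envL_iff Ψ hΨ] at hy
    rw [Submodule.mkQ_apply, Submodule.Quotient.mk_eq_zero, mem_envL_iff Ψ hΨ]
    refine eq_zero_of_shift (t := t) _ fun j => ?_
    rw [← envCoef_envW rel Ψ hΨ, hy, Finsupp.zero_apply]
  · intro a
    exact ⟨(envL ι ι).mkQ (a ⊗ₜ op 1), by rw [hμ, henvA, mul_one, mul_one]⟩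
  · have hc : ∀ (c : ℕ →₀ R) (a : A), ∃ z, (envL ι ι).mkQ (a ⊗ₜ op (Ψ c)) -
        (envL ι ι).mkQ ((a * Ψ c) ⊗ₜ op 1) = D z := by
      intro c
      induction c using Finsupp.induction_linear with
      | zero => exact fun a => ⟨0, by simp⟩
      | add c d hc hd =>
        intro a
        obtain ⟨u, hu⟩ := hc a
        obtain ⟨v, hv⟩ := hd a
        refine ⟨u + v, ?_⟩
        rw [map_add D, ← hu, ← hv, map_add, mul_add, op_add, TensorProduct.tmul_add,
          TensorProduct.add_tmul, map_add, map_add]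
        abel
      | single i s =>
        have hs : ∀ (a b : A), (envL ι ι).mkQ (a ⊗ₜ op (ι s * b)) =
            (envL ι ι).mkQ ((a * ι s) ⊗ₜ op b) := by
          intro a b
          rw [eq_comm, ← sub_eq_zero, ← map_sub, Submodule.mkQ_apply,
            Submodule.Quotient.mk_eq_zero]
          exact envL_rel ι ι a b s
        intro a
        rw [hΨ, hs, ← mul_assoc]
        generalize a * ι s = a
        induction i generalizing a with
        | zero => exact ⟨0, by simp⟩
        | succ i ih =>
          obtain ⟨u, hu⟩ := ih (a * t)
          refine ⟨u - (envL (ι.comp α.toAlgHom) ι).mkQ (a ⊗ₜ op (t ^ i)), ?_⟩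
          rw [map_sub D, ← hu, hD, tmul_envW, map_sub, pow_succ', mul_assoc]
          abel
    have hx : ∀ x : A ⊗[k] Aᵐᵒᵖ, ∃ z, (envL ι ι).mkQ x -
        (envL ι ι).mkQ ((x • (1 : A)) ⊗ₜ op 1) = D z := by
      intro x
      induction x using TensorProduct.induction_on with
      | zero =>
        refine ⟨0, (congrArg (fun q => (envL ι ι).mkQ 0 - (envL ι ι).mkQ (q ⊗ₜ op 1))
          (zero_smul (A ⊗[k] Aᵐᵒᵖ) (1 : A))).trans ?_⟩
        simp
      | add x y hx hy =>
        obtain ⟨u, hu⟩ := hx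
        obtain ⟨v, hv⟩ := hy
        refine ⟨u + v, ?_⟩
        rw [map_add D, ← hu, ← hv, add_smul, TensorProduct.add_tmul, map_add, map_add]
        abel
      | tmul a b =>
        obtain ⟨b, rfl⟩ := op_surjective b
        obtain ⟨c, rfl⟩ := Ψ.surjective b
        rw [henvA, mul_one]
        exact hc c a
    intro y
    obtain ⟨x, rfl⟩ := Submodule.mkQ_surjective _ y
    constructor
    · intro h0
      obtain ⟨z, hz⟩ := hx x
      rw [hμ] at h0
      rw [h0, TensorProduct.zero_tmul, map_zero, sub_zero] at hz
      exact ⟨z, hz.symm⟩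
    · rintro ⟨z, hz⟩
      obtain ⟨w, rfl⟩ := Submodule.mkQ_surjective _ z
      rw [← hz, hD, hμ, mul_smul]
      simp only [envW, sub_smul, henvA, one_mul, mul_one, sub_self, smul_zero]

end Ore

/-- Let `R` be an algebra over a field `k` of finite bidimension (the projective
dimension of `R` as a module over its enveloping algebra `R ⊗ Rᵒᵖ`, the action being
`(a ⊗ bᵒᵖ) • x = a·x·b`), let `α` be an automorphism of `R`, `δ` an `α`-derivation,
and `A = R[t; α, δ]` the Ore extension.  Then `bidim A ≤ bidim R + 1`. -/
theorem bidim_oreExtension_le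
    {k R A : Type u} [Field k] [Ring R] [Algebra k R] [Ring A] [Algebra k A]
    [envR : Module (R ⊗[k] Rᵐᵒᵖ) R]
    (henvR : ∀ (a b x : R), (a ⊗ₜ[k] MulOpposite.op b) • x = a * x * b)
    [envA : Module (A ⊗[k] Aᵐᵒᵖ) A]
    (henvA : ∀ (a b x : A), (a ⊗ₜ[k] MulOpposite.op b) • x = a * x * b)
    (α : R ≃ₐ[k] R) (δ : R →ₗ[k] R)
    (hδ : ∀ a b : R, δ (a * b) = δ a * b + α a * δ b)
    (ι : R →ₐ[k] A) (t : A) (hA : IsOreExtension k R α δ A ι t)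
    (hfin : projDim (R ⊗[k] Rᵐᵒᵖ) R inferInstance envR ≠ ⊤) :
    projDim (A ⊗[k] Aᵐᵒᵖ) A inferInstance envA ≤
      projDim (R ⊗[k] Rᵐᵒᵖ) R inferInstance envR + 1 := by
  let Ψ := LinearEquiv.ofBijective (leftMap ι t) (leftMap_bijective hA)
  have hΨ : ∀ i r, Ψ (Finsupp.single i r) = ι r * t ^ i := fun i r => leftMap_single ι t i r
  have hne : {d : ℕ∞ | ∃ n : ℕ, d = n ∧
      pdLE (R ⊗[k] Rᵐᵒᵖ) n R inferInstance envR}.Nonempty := by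
    by_contra h
    rw [Set.not_nonempty_iff_eq_empty] at h
    exact hfin (by rw [projDim, h, sInf_empty])
  obtain ⟨n, hn, hpd⟩ := csInf_mem hne
  have h := pdLE_ore hA.rel Ψ hΨ henvR henvA n hpd
  have h2 : projDim (R ⊗[k] Rᵐᵒᵖ) R inferInstance envR = n := hn
  rw [h2]
  exact sInf_le ⟨n + 1, by push_cast; rfl, h⟩
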